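/- For every n ≥ 0, Σ_{λ ⊢ n} (F_λ²/n!) · l_λ^(α)(x) = (x+α)^n, where the sum runs over all partitions λ of n, F_λ is the number of standard Young tableaux of shape λ, and l_λ^(α) is the monic Wronskian Laguerre polynomial associated to λ. -/

import Mathlib

open Polynomial Finset

/-- `AddBox μ lam` means the Young diagram `lam` is obtained from `μ` by adding one box,
i.e. `μ ⋖ lam` in the Young lattice. -/
def AddBox (μ lam : YoungDiagram) : Prop := μ ≤ lam ∧ lam.card = μ.card + 1

/-- The sum of the contents (column − row) of the boxes of `lam` not in `μ`;
when `lam/μ` is a single box this is the content of that box. -/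
def skewContent (lam μ : YoungDiagram) : ℤ :=
  ∑ c ∈ lam.cells \ μ.cells, ((c.2 : ℤ) - (c.1 : ℤ))

/-- `F μ`: the number of standard Young tableaux of shape `μ`, i.e. bijective fillings of the
cells of `μ` by `0, …, |μ|-1` that increase along rows and columns. -/
noncomputable def SYTCount (μ : YoungDiagram) : ℕ :=
  Nat.card {T : μ.cells ≃ Fin μ.card //
    ∀ a b : μ.cells, (a : ℕ × ℕ).1 ≤ (b : ℕ × ℕ).1 → (a : ℕ × ℕ).2 ≤ (b : ℕ × ℕ).2 →
      (T a : ℕ) ≤ (T b : ℕ)}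

/-- `lam` is obtained from `ρ` by adding a horizontal domino. -/
def AddDominoH (ρ lam : YoungDiagram) : Prop :=
  ρ ≤ lam ∧ ∃ i j : ℕ, lam.cells \ ρ.cells = {(i, j), (i, j + 1)}

/-- `lam` is obtained from `ρ` by adding a vertical domino. -/
def AddDominoV (ρ lam : YoungDiagram) : Prop :=
  ρ ≤ lam ∧ ∃ i j : ℕ, lam.cells \ ρ.cells = {(i, j), (i + 1, j)}

/-- The number of (nonempty) rows of a Young diagram. -/
def nrows (μ : YoungDiagram) : ℕ := μ.colLen 0

/-- The degree vector of a partition: `n_i = λ_i + r - i` (here `0`-indexed). -/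
def degVec (μ : YoungDiagram) (i : Fin (nrows μ)) : ℕ :=
  μ.rowLen i + (nrows μ - 1 - (i : ℕ))

/-- Modified Laguerre polynomials, defined by `l_0 = 1`, `l_1 = x + α`,
`l_n = (x+α-n+1) l_{n-1} + x(n-1) l_{n-2}`. -/
noncomputable def lm (α : ℝ) : ℕ → Polynomial ℝ
  | 0 => 1
  | 1 => X + C α
  | (n + 2) =>
      (X + C (α - ((n : ℝ) + 2) + 1)) * lm α (n + 1) + X * C ((n : ℝ) + 1) * lm α n

/-- The Wronskian of a family of polynomials. -/
noncomputable def Wr {r : ℕ} (p : Fin r → Polynomial ℝ) : Polynomial ℝ :=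
  Matrix.det (Matrix.of fun i j : Fin r => derivative^[(i : ℕ)] (p j))

/-- The Wronskian Laguerre polynomial
`l_μ^(α) = Wr[l_{n_1}, …, l_{n_r}] / ∏_{i<j} (n_j - n_i)` where `(n_i)` is the degree vector. -/
noncomputable def lW (α : ℝ) (μ : YoungDiagram) : Polynomial ℝ :=
  C (∏ p ∈ Finset.univ.filter (fun p : Fin (nrows μ) × Fin (nrows μ) => p.1 < p.2),
        ((degVec μ p.2 : ℝ) - (degVec μ p.1 : ℝ)))⁻¹
    * Wr (fun i => lm α (degVec μ i))

/-!
Write `s_μ = det (h_{μ_j - j + i})` for the Jacobi–Trudi determinant of a sequence `h`. The Pieri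
rule `h₁ s_μ = ∑_{λ ⋗ μ} s_λ` and the branching rule `F_λ = ∑_{μ ⋖ λ} F_μ` give
`∑_{λ ⊢ n} F_λ s_λ = h₁ ^ n`. For `h_k = 1 / k!` one has `h_{k-1} = k h_k`, hence
`∑_{μ ⋖ λ} s_μ = |λ| s_λ` and, again by branching, `s_λ = F_λ / n!`. Finally, the derivatives of an
Appell sequence `p` are multiples of its members, so its Wronskian is, up to a factor, the
Jacobi–Trudi determinant for `h_k = p_k / k!`; the Vandermonde product is the same factor times the
determinant for `h_k = 1 / k!`. Therefore `(F_λ² / n!)` times the Wronskian polynomial of `λ` is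
`F_λ s_λ` for `h_k = p_k / k!`, where `h₁ = p₁`.
-/

section Determinant

variable {R : Type*}

/-- The (transposed) `N × N` Jacobi–Trudi matrix of the sequence `h` of complete homogeneous
functions, whose determinant is a Schur function when `f` is a partition. The
indices are `0`-based, and `f` is an arbitrary integer sequence so that boxes can be added to or
removed from any row. -/
def jacobiTrudi (h : ℤ → R) (N : ℕ) (f : ℕ → ℤ) : Matrix (Fin N) (Fin N) R :=
  Matrix.of fun i j ↦ h (f j - (j : ℕ) + (i : ℕ))

theorem jacobiTrudi_add_single (h : ℤ → R) (N : ℕ) (f : ℕ → ℤ) (j : Fin N) :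
    jacobiTrudi h N (f + Pi.single (j : ℕ) 1) =
      (jacobiTrudi h N f).updateCol j ((jacobiTrudi (fun k ↦ h (k + 1)) N f).col j) := by
  ext i k
  rcases eq_or_ne k j with rfl | hkj
  · simp only [jacobiTrudi, Matrix.of_apply, Pi.add_apply, Pi.single_eq_same,
      Matrix.updateCol_self, Matrix.col_apply]
    congr 1; ring
  · simp [jacobiTrudi, hkj, Fin.val_inj]

theorem jacobiTrudi_sub_single (h : ℤ → R) (N : ℕ) (f : ℕ → ℤ) (j : Fin N) :
    jacobiTrudi h N (f - Pi.single (j : ℕ) 1) =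
      (jacobiTrudi h N f).updateCol j ((jacobiTrudi (fun k ↦ h (k - 1)) N f).col j) := by
  ext i k
  rcases eq_or_ne k j with rfl | hkj
  · simp only [jacobiTrudi, Matrix.of_apply, Pi.sub_apply, Pi.single_eq_same,
      Matrix.updateCol_self, Matrix.col_apply]
    congr 1; ring
  · simp [jacobiTrudi, hkj, Fin.val_inj]

variable [CommRing R]

theorem sum_det_updateCol {ι : Type*} [Fintype ι] [DecidableEq ι] (M M' : Matrix ι ι R) :
    ∑ j, (M.updateCol j (M'.col j)).det = (M.adjugate * M').trace := by
  simp only [← Matrix.cramer_apply, Matrix.cramer_eq_adjugate_mulVec]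
  rfl

theorem sum_det_updateRow {ι : Type*} [Fintype ι] [DecidableEq ι] (M M' : Matrix ι ι R) :
    ∑ i, (M.updateRow i (M' i)).det = (M.adjugate * M').trace := by
  rw [← Matrix.trace_transpose, Matrix.transpose_mul, Matrix.trace_mul_comm,
    Matrix.adjugate_transpose, ← sum_det_updateCol]
  exact Finset.sum_congr rfl fun i _ ↦ by
    rw [← Matrix.det_transpose, ← Matrix.updateCol_transpose]; rfl

theorem det_eq_of_last_col_eq_zero {N : ℕ} (M : Matrix (Fin (N + 1)) (Fin (N + 1)) R)
    (hM : ∀ i, i ≠ Fin.last N → M i (Fin.last N) = 0) :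
    M.det = M (Fin.last N) (Fin.last N) * (M.submatrix Fin.castSucc Fin.castSucc).det := by
  rw [Matrix.det_succ_column M (Fin.last N), Finset.sum_eq_single (Fin.last N)]
  · simp [← two_mul, pow_mul, Fin.succAbove_last]
  · intro i _ hi
    simp [hM i hi]
  · simp

theorem sum_det_jacobiTrudi_sub_single {h : ℤ → R} (hrec : ∀ k : ℤ, h (k - 1) = k * h k)
    (N : ℕ) (f : ℕ → ℤ) :
    ∑ j ∈ range N, (jacobiTrudi h N (f - Pi.single j 1)).det =
      (∑ j ∈ range N, f j : ℤ) * (jacobiTrudi h N f).det := by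
  -- Entrywise, `k = (f j - j) + i`, so the factor `k` is a column scaling plus a row scaling.
  have hscale : jacobiTrudi (fun k ↦ h (k - 1)) N f =
      jacobiTrudi h N f * Matrix.diagonal (fun j : Fin N ↦ ((f j - (j : ℕ) : ℤ) : R)) +
        Matrix.diagonal (fun i : Fin N ↦ ((i : ℕ) : R)) * jacobiTrudi h N f := by
    ext i j
    simp only [jacobiTrudi, hrec, Matrix.add_apply, Matrix.mul_diagonal, Matrix.diagonal_mul,
      Matrix.of_apply]
    push_cast
    ring
  simp only [Finset.sum_range, jacobiTrudi_sub_single, sum_det_updateCol, hscale]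
  rw [mul_add, Matrix.trace_add, ← mul_assoc, Matrix.adjugate_mul, ← mul_assoc,
    Matrix.trace_mul_comm (_ * _), ← mul_assoc, Matrix.mul_adjugate]
  simp only [Matrix.smul_mul, one_mul, Matrix.trace_smul, Matrix.trace_diagonal, smul_eq_mul,
    ← mul_add, ← Finset.sum_add_distrib]
  push_cast
  simp only [sub_add_cancel, mul_comm]

theorem det_jacobiTrudi_eq_zero_of_ascent {h : ℤ → R} (hneg : ∀ k < 0, h k = 0)
    {N k : ℕ} {f : ℕ → ℤ} (hk : k < N) (hN : f N = 0)
    (hf : f (k + 1) = f k + 1) : (jacobiTrudi h N f).det = 0 := by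
  obtain rfl | hk1 : N = k + 1 ∨ k + 1 < N := by omega
  · refine Matrix.det_eq_zero_of_column_eq_zero ⟨k, hk⟩ fun i ↦ hneg _ ?_
    have := i.2
    dsimp only
    omega
  · refine Matrix.det_zero_of_column_eq (i := ⟨k, hk⟩) (j := ⟨k + 1, hk1⟩) (by simp) fun i ↦ ?_
    simp [jacobiTrudi, hf]

theorem sum_det_jacobiTrudi_add_single {h : ℤ → R} (hneg : ∀ k < 0, h k = 0)
    {N : ℕ} {f : ℕ → ℤ} (hN : f N = 0) :
    ∑ j ∈ range (N + 1), (jacobiTrudi h (N + 1) (f + Pi.single j 1)).det =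
      h 1 * (jacobiTrudi h N f).det := by
  -- Shifting row `i` of the matrix turns it into row `i + 1`, so only the last row contributes.
  simp only [Finset.sum_range, jacobiTrudi_add_single, sum_det_updateCol, ← sum_det_updateRow]
  rw [Finset.sum_eq_single_of_mem (Fin.last N) (Finset.mem_univ _), det_eq_of_last_col_eq_zero]
  · congr 1
    · simp [jacobiTrudi, hN]
    · congr 1
      ext i j
      simp [jacobiTrudi, Matrix.updateRow_ne, i.castSucc_ne_last]
  · intro i hi
    have := Fin.val_lt_last hi
    rw [Matrix.updateRow_ne hi]
    exact hneg _ (by simp [hN]; omega)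
  · intro i _ hi
    have hi1 : (i : ℕ) + 1 < N + 1 := Nat.succ_lt_succ (Fin.val_lt_last hi)
    have hne : (⟨i + 1, hi1⟩ : Fin (N + 1)) ≠ i := by simp [Fin.ext_iff]
    refine Matrix.det_zero_of_row_eq hne ?_
    rw [Matrix.updateRow_self, Matrix.updateRow_ne hne]
    ext j
    simp [jacobiTrudi, add_assoc]

theorem det_jacobiTrudi_succ {h : ℤ → R} (hzero : h 0 = 1) (hneg : ∀ k < 0, h k = 0)
    {N : ℕ} {f : ℕ → ℤ} (hN : f N = 0) :
    (jacobiTrudi h (N + 1) f).det = (jacobiTrudi h N f).det := by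
  rw [det_eq_of_last_col_eq_zero]
  · simp only [jacobiTrudi, Matrix.of_apply, Fin.val_last, hN, zero_sub, neg_add_cancel, hzero,
      one_mul]
    rfl
  · intro i hi
    have := Fin.val_lt_last hi
    exact hneg _ (by simp [hN]; omega)

end Determinant

section YoungLattice

/-- The parts of a partition as an integer sequence, extended by zeros, so that
boxes can be added and subtracted by adding and subtracting unit vectors. -/
def parts (μ : YoungDiagram) (i : ℕ) : ℤ := μ.rowLen i

theorem mem_iff_lt_parts {μ : YoungDiagram} {i k : ℕ} : (i, k) ∈ μ ↔ (k : ℤ) < parts μ i := by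
  rw [YoungDiagram.mem_iff_lt_rowLen, parts, Nat.cast_lt]

theorem parts_nonneg (μ : YoungDiagram) (i : ℕ) : 0 ≤ parts μ i := Int.natCast_nonneg _

theorem parts_antitone (μ : YoungDiagram) : Antitone (parts μ) :=
  fun _ _ hij ↦ Nat.cast_le.2 (μ.rowLen_anti _ _ hij)

theorem parts_injective : Function.Injective parts := fun μ ν h ↦ by
  ext ⟨i, k⟩
  simp only [YoungDiagram.mem_cells, mem_iff_lt_parts, h]

theorem parts_eq_zero_iff {μ : YoungDiagram} {N : ℕ} : parts μ N = 0 ↔ nrows μ ≤ N := by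
  rw [parts, Nat.cast_eq_zero, nrows, ← not_lt, ← YoungDiagram.mem_iff_lt_colLen,
    YoungDiagram.mem_iff_lt_rowLen, Nat.pos_iff_ne_zero, not_not]

theorem exists_parts_eq {g : ℕ → ℤ} (hg : Antitone g) {N : ℕ} (hN : ∀ k ≥ N, g k = 0) :
    ∃ μ, parts μ = g := by
  have hg0 (i : ℕ) : 0 ≤ g i := (hN _ (le_max_right i N)).ge.trans (hg (le_max_left i N))
  have hbox {i k : ℕ} (hk : (k : ℤ) < g i) : (i, k) ∈ range N ×ˢ range (g 0).toNat := by
    have hi : i < N := not_le.1 fun hi ↦ by have := hN i hi; omega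
    have hi0 : g i ≤ g 0 := hg i.zero_le
    simp only [Finset.mem_product, Finset.mem_range]
    omega
  obtain ⟨μ, hμ⟩ : ∃ μ : YoungDiagram, ∀ i k : ℕ, (i, k) ∈ μ ↔ (k : ℤ) < g i := by
    refine ⟨⟨{c ∈ range N ×ˢ range (g 0).toNat | (c.2 : ℤ) < g c.1}, ?_⟩, fun i k ↦ ?_⟩
    · rintro ⟨i, k⟩ ⟨i', k'⟩ ⟨hi : i' ≤ i, hk : k' ≤ k⟩ hc
      have hlt : (k : ℤ) < g i := (Finset.mem_filter.1 hc).2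
      have hlt' : (k' : ℤ) < g i' := (Nat.cast_le.2 hk).trans_lt (hlt.trans_le (hg hi))
      exact Finset.mem_coe.2 (Finset.mem_filter.2 ⟨hbox hlt', hlt'⟩)
    · exact Finset.mem_filter.trans (and_iff_right_of_imp hbox)
  refine ⟨μ, funext fun i ↦ ?_⟩
  simp only [mem_iff_lt_parts] at hμ
  have := hμ i (parts μ i).toNat
  have := hμ i (g i).toNat
  have := parts_nonneg μ i
  have := hg0 i
  omega

theorem card_eq_sum_parts {μ : YoungDiagram} {N : ℕ} (hN : nrows μ ≤ N) :
    (μ.card : ℤ) = ∑ i ∈ range N, parts μ i := by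
  have hrow : ∀ c ∈ μ.cells, c.1 ∈ range N := fun c hc ↦
    Finset.mem_range.2 <| (YoungDiagram.mem_iff_lt_colLen.1 <|
      μ.up_left_mem le_rfl c.2.zero_le hc).trans_le hN
  simp only [parts, YoungDiagram.rowLen_eq_card, ← Nat.cast_sum]
  exact congrArg Nat.cast (Finset.card_eq_sum_card_fiberwise hrow)

theorem addBox_iff_exists_insert {μ lam : YoungDiagram} :
    AddBox μ lam ↔ ∃ c ∉ μ.cells, insert c μ.cells = lam.cells := by
  rw [Finset.exists_eq_insert_iff, YoungDiagram.cells_subset_iff, AddBox, eq_comm]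

theorem parts_eq_add_single_of_insert {μ lam : YoungDiagram} {c : ℕ × ℕ} (hc : c ∉ μ.cells)
    (h : insert c μ.cells = lam.cells) : parts lam = parts μ + Pi.single c.1 1 := by
  ext i
  rw [Pi.add_apply, parts, parts, YoungDiagram.rowLen_eq_card, YoungDiagram.rowLen_eq_card,
    YoungDiagram.row, YoungDiagram.row, ← h, Finset.filter_insert]
  rcases eq_or_ne c.1 i with rfl | hi
  · rw [if_pos rfl, Finset.card_insert_of_notMem (mt (fun h ↦ (Finset.mem_filter.1 h).1) hc)]
    simp
  · simp [hi, hi.symm]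

theorem addBox_iff_exists_single {μ lam : YoungDiagram} :
    AddBox μ lam ↔ ∃ j, parts lam = parts μ + Pi.single j 1 := by
  refine ⟨fun h ↦ ?_, fun ⟨j, hj⟩ ↦ ⟨?_, ?_⟩⟩
  · obtain ⟨c, hc, hins⟩ := addBox_iff_exists_insert.1 h
    exact ⟨c.1, parts_eq_add_single_of_insert hc hins⟩
  · rintro ⟨i, k⟩ hik
    have hle : parts μ i ≤ parts lam i := by
      rw [hj, Pi.add_apply, Pi.single_apply]
      split_ifs <;> omega
    exact mem_iff_lt_parts.2 ((mem_iff_lt_parts.1 hik).trans_le hle)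
  · have hjlam : j < nrows lam := by
      have := parts_nonneg μ j
      rw [← not_le, ← parts_eq_zero_iff, hj, Pi.add_apply, Pi.single_eq_same]
      omega
    have hcard := card_eq_sum_parts (le_max_right (nrows μ) (nrows lam))
    simp only [hj, Pi.add_apply, Finset.sum_add_distrib, Finset.sum_pi_single', Finset.mem_range,
      lt_max_of_lt_right hjlam, if_true, ← card_eq_sum_parts (le_max_left (nrows μ) _)] at hcard
    exact_mod_cast hcard

theorem cells_subset_range_product (μ : YoungDiagram) :
    μ.cells ⊆ range μ.card ×ˢ range μ.card := by
  rintro ⟨i, k⟩ hc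
  have hi : i < μ.colLen k := YoungDiagram.mem_iff_lt_colLen.1 hc
  have hk : k < μ.rowLen i := YoungDiagram.mem_iff_lt_rowLen.1 hc
  rw [YoungDiagram.colLen_eq_card] at hi
  rw [YoungDiagram.rowLen_eq_card] at hk
  exact Finset.mem_product.2 ⟨Finset.mem_range.2 (hi.trans_le (Finset.card_filter_le _ _)),
    Finset.mem_range.2 (hk.trans_le (Finset.card_filter_le _ _))⟩

theorem finite_setOf_card_eq (n : ℕ) : {μ : YoungDiagram | μ.card = n}.Finite := by
  refine .of_finite_image (f := YoungDiagram.cells) (.subset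
    (Finset.finite_toSet (range n ×ˢ range n).powerset) ?_) fun _ _ _ _ ↦ YoungDiagram.ext
  rintro _ ⟨μ, rfl, rfl⟩
  exact Finset.mem_coe.2 (Finset.mem_powerset.2 (cells_subset_range_product μ))

/-- The partitions of `n`, as a finite set of Young diagrams to sum over. -/
noncomputable def diagrams (n : ℕ) : Finset YoungDiagram := (finite_setOf_card_eq n).toFinset

@[simp]
theorem mem_diagrams {n : ℕ} {μ : YoungDiagram} : μ ∈ diagrams n ↔ μ.card = n := by
  simp [diagrams]

@[simp]
theorem diagrams_zero : diagrams 0 = {⊥} := by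
  ext μ
  rw [mem_diagrams, Finset.mem_singleton, YoungDiagram.card, Finset.card_eq_zero,
    ← YoungDiagram.cells_bot, YoungDiagram.ext_iff]

open Classical in
/-- The diagrams covering `μ` in the Young lattice. -/
noncomputable def upperCovers (μ : YoungDiagram) : Finset YoungDiagram :=
  {lam ∈ diagrams (μ.card + 1) | AddBox μ lam}

open Classical in
/-- The diagrams covered by `lam` in the Young lattice. -/
noncomputable def lowerCovers (lam : YoungDiagram) : Finset YoungDiagram :=
  {μ ∈ diagrams (lam.card - 1) | AddBox μ lam}

@[simp]
theorem mem_upperCovers {μ lam : YoungDiagram} : lam ∈ upperCovers μ ↔ AddBox μ lam := by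
  simp only [upperCovers, Finset.mem_filter, mem_diagrams, and_iff_right_iff_imp]
  exact And.right

@[simp]
theorem mem_lowerCovers {μ lam : YoungDiagram} : μ ∈ lowerCovers lam ↔ AddBox μ lam := by
  simp only [lowerCovers, Finset.mem_filter, mem_diagrams, and_iff_right_iff_imp]
  intro h
  rw [h.2, Nat.add_sub_cancel]

theorem sum_diagrams_succ_sum_lowerCovers {M : Type*} [AddCommMonoid M] (n : ℕ)
    (g : YoungDiagram → YoungDiagram → M) :
    ∑ lam ∈ diagrams (n + 1), ∑ μ ∈ lowerCovers lam, g μ lam =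
      ∑ μ ∈ diagrams n, ∑ lam ∈ upperCovers μ, g μ lam := by
  refine Finset.sum_comm' fun lam μ ↦ ?_
  simp only [mem_diagrams, mem_lowerCovers, mem_upperCovers]
  exact ⟨fun ⟨hn, h⟩ ↦ ⟨h, Nat.succ_injective (h.2.symm.trans hn)⟩,
    fun ⟨h, hn⟩ ↦ ⟨by rw [h.2, hn], h⟩⟩

end YoungLattice

section Schur

variable {R : Type*} [CommRing R]

/-- The Schur function of the partition `μ`, specialised so that the complete homogeneous
functions take the values `h k`; it is defined by the Jacobi–Trudi formula. -/
noncomputable def schur (h : ℤ → R) (μ : YoungDiagram) : R :=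
  (jacobiTrudi h (nrows μ) (parts μ)).det

theorem schur_bot (h : ℤ → R) : schur h ⊥ = 1 := by
  have : IsEmpty (Fin (nrows ⊥)) := by
    rw [Nat.le_zero.1 (parts_eq_zero_iff.1 (by simp [parts, YoungDiagram.rowLen_eq_card,
      YoungDiagram.row]))]
    infer_instance
  exact Matrix.det_isEmpty

variable {h : ℤ → R} (hzero : h 0 = 1) (hneg : ∀ k < 0, h k = 0)
include hzero hneg

theorem det_jacobiTrudi_parts {μ : YoungDiagram} {N : ℕ} (hN : nrows μ ≤ N) :
    (jacobiTrudi h N (parts μ)).det = schur h μ := by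
  induction N, hN using Nat.le_induction with
  | base => rfl
  | succ N hN ih => rw [det_jacobiTrudi_succ hzero hneg (parts_eq_zero_iff.2 hN), ih]

theorem sum_schur_eq_sum_det_jacobiTrudi {s : Finset YoungDiagram} {N : ℕ} {g : ℕ → ℕ → ℤ}
    (hs : ∀ μ, μ ∈ s ↔ ∃ j < N, parts μ = g j) (hinj : Function.Injective g)
    (hN : ∀ j < N, ∀ k ≥ N, g j k = 0) (hstep : ∀ j k, g j (k + 1) ≤ g j k + 1) :
    ∑ μ ∈ s, schur h μ = ∑ j ∈ range N, (jacobiTrudi h N (g j)).det := by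
  choose! row hrow hparts using fun μ ↦ (hs μ).1
  refine Finset.sum_of_injOn row ?_ (fun μ hμ ↦ Finset.mem_coe.2 (Finset.mem_range.2 (hrow μ hμ)))
    ?_ ?_
  · intro μ hμ ν hν hμν
    exact parts_injective (by rw [hparts μ hμ, hparts ν hν, hμν])
  · intro j hj hjs
    have hj := Finset.mem_range.1 hj
    by_cases hanti : Antitone (g j)
    · obtain ⟨μ, hμ⟩ := exists_parts_eq hanti (hN j hj)
      have hμs := (hs μ).2 ⟨j, hj, hμ⟩
      exact absurd ⟨μ, hμs, hinj (by rw [← hparts μ hμs, hμ])⟩ hjs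
    · obtain ⟨k, hk⟩ : ∃ k, g j k < g j (k + 1) := by
        contrapose! hanti
        exact antitone_nat_of_succ_le hanti
      have hkN : k < N := not_le.1 fun hkN ↦ by
        rw [hN j hj k hkN, hN j hj (k + 1) (by omega)] at hk
        omega
      exact det_jacobiTrudi_eq_zero_of_ascent hneg hkN (hN j hj N le_rfl)
        (le_antisymm (hstep j k) hk)
  · intro μ hμ
    rw [← hparts μ hμ, det_jacobiTrudi_parts hzero hneg]
    rw [← parts_eq_zero_iff, hparts μ hμ, hN _ (hrow μ hμ) N le_rfl]

theorem sum_schur_upperCovers (μ : YoungDiagram) :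
    ∑ lam ∈ upperCovers μ, schur h lam = h 1 * schur h μ := by
  have hμ : ∀ k ≥ nrows μ, parts μ k = 0 := fun k hk ↦ parts_eq_zero_iff.2 hk
  rw [schur, ← sum_det_jacobiTrudi_add_single hneg (hμ _ le_rfl)]
  refine sum_schur_eq_sum_det_jacobiTrudi hzero hneg (fun lam ↦ ?_) ?_ ?_ ?_
  · rw [mem_upperCovers, addBox_iff_exists_single]
    refine ⟨fun ⟨j, hj⟩ ↦ ⟨j, not_le.1 fun hjN ↦ ?_, hj⟩, fun ⟨j, _, hj⟩ ↦ ⟨j, hj⟩⟩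
    have hanti : parts lam j ≤ parts lam (nrows μ) := parts_antitone lam (by omega)
    simp [hj, hμ j (by omega), hμ _ le_rfl, show nrows μ ≠ j by omega] at hanti
  · exact fun i j hij ↦ by simpa [Pi.single_apply] using congrFun hij i
  · intro j hj k hk
    simp [hμ k (by omega), show k ≠ j by omega]
  · intro j k
    have := parts_antitone μ k.le_succ
    simp only [Pi.add_apply, Pi.single_apply]
    grind

theorem sum_schur_lowerCovers (hrec : ∀ k : ℤ, h (k - 1) = k * h k) (lam : YoungDiagram) :
    ∑ μ ∈ lowerCovers lam, schur h μ = lam.card * schur h lam := by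
  have hlam : ∀ k ≥ nrows lam, parts lam k = 0 := fun k hk ↦ parts_eq_zero_iff.2 hk
  rw [schur, ← Int.cast_natCast, card_eq_sum_parts le_rfl, ← sum_det_jacobiTrudi_sub_single hrec]
  refine sum_schur_eq_sum_det_jacobiTrudi hzero hneg (fun μ ↦ ?_) ?_ ?_ ?_
  · simp only [mem_lowerCovers, addBox_iff_exists_single, ← eq_sub_iff_add_eq,
      eq_comm (a := parts lam)]
    refine ⟨fun ⟨j, hj⟩ ↦ ⟨j, not_le.1 fun hjN ↦ ?_, hj⟩, fun ⟨j, _, hj⟩ ↦ ⟨j, hj⟩⟩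
    have := parts_nonneg μ j
    simp [hj, hlam j hjN] at this
  · exact fun i j hij ↦ by simpa [Pi.single_apply] using congrFun hij i
  · intro j hj k hk
    simp [hlam k hk, show k ≠ j by omega]
  · intro j k
    have := parts_antitone lam k.le_succ
    simp only [Pi.sub_apply, Pi.single_apply]
    grind

end Schur

section StandardTableaux

/-- The bijective order-preserving labellings of `α` by `Fin n`, i.e. its linear extensions.
Standard Young tableaux are the case where `α` is the set of cells of a Young diagram. -/
abbrev MonotoneLabeling (α : Type*) [Preorder α] (n : ℕ) : Type _ := {T : α ≃ Fin n // Monotone T}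

theorem card_monotoneLabeling_congr {α β : Type*} [Preorder α] [Preorder β] (e : α ≃o β) (n : ℕ) :
    Nat.card (MonotoneLabeling α n) = Nat.card (MonotoneLabeling β n) :=
  Nat.card_congr <| (e.toEquiv.equivCongr (.refl _)).subtypeEquiv fun T ↦
    ⟨fun hT ↦ hT.comp e.symm.monotone, fun hT x y hxy ↦ by simpa using hT (e.monotone hxy)⟩

theorem SYTCount_eq_card_monotoneLabeling {μ : YoungDiagram} {n : ℕ} (hμ : μ.card = n) :
    SYTCount μ = Nat.card (MonotoneLabeling μ.cells n) := by
  subst hμ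
  exact Nat.card_congr <| Equiv.subtypeEquivRight fun T ↦
    ⟨fun hT a b hab ↦ hT a b hab.1 hab.2, fun hT _ _ h₁ h₂ ↦ hT ⟨h₁, h₂⟩⟩

section ExtendLast

variable {α : Type*} [DecidableEq α] {n : ℕ} (c : α)

/-- Extend a labelling of `α \ {c}` to `α`, giving `c` the new largest label. -/
def extendLast (S : {x // x ≠ c} ≃ Fin n) : α ≃ Fin (n + 1) :=
  (Equiv.optionSubtypeNe c).symm.trans ((Equiv.optionCongr S).trans finSuccEquivLast.symm)

@[simp]
theorem extendLast_self (S : {x // x ≠ c} ≃ Fin n) : extendLast c S c = Fin.last n := by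
  simp [extendLast]

theorem extendLast_of_ne (S : {x // x ≠ c} ≃ Fin n) {x : α} (hx : x ≠ c) :
    extendLast c S x = (S ⟨x, hx⟩).castSucc := by
  simp [extendLast, Equiv.optionSubtypeNe_symm_of_ne hx]

theorem extendLast_injective :
    Function.Injective (extendLast c : ({x // x ≠ c} ≃ Fin n) → α ≃ Fin (n + 1)) := by
  refine fun S T h ↦ Equiv.ext fun ⟨x, hx⟩ ↦ Fin.castSucc_injective n ?_
  rw [← extendLast_of_ne c S, ← extendLast_of_ne c T, h]

theorem exists_extendLast_eq {T : α ≃ Fin (n + 1)} (hT : T c = Fin.last n) :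
    ∃ S, extendLast c S = T := by
  have hne (x : α) : x ≠ c ↔ T x ≠ Fin.last n := by rw [← hT, T.injective.ne_iff]
  refine ⟨(T.subtypeEquiv hne).trans (finSuccAboveEquiv (Fin.last n)).symm, Equiv.ext fun x ↦ ?_⟩
  rcases eq_or_ne x c with rfl | hx
  · rw [extendLast_self, hT]
  · rw [extendLast_of_ne c _ hx, ← Fin.succAbove_last]
    exact congrArg Subtype.val
      ((finSuccAboveEquiv (Fin.last n)).apply_symm_apply ⟨T x, (hne x).1 hx⟩)

theorem monotone_extendLast_iff [PartialOrder α] {c : α} (hc : IsMax c)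
    {S : {x // x ≠ c} ≃ Fin n} : Monotone (extendLast c S) ↔ Monotone S := by
  refine ⟨fun h x y hxy ↦ ?_, fun h x y hxy ↦ ?_⟩
  · simpa [extendLast_of_ne c S x.2, extendLast_of_ne c S y.2] using h hxy
  · rcases eq_or_ne y c with rfl | hy
    · exact (Fin.le_last _).trans_eq (extendLast_self y S).symm
    · have hx : x ≠ c := by
        rintro rfl
        exact hy (hc.eq_of_ge hxy)
      rw [extendLast_of_ne c S hx, extendLast_of_ne c S hy, Fin.castSucc_le_castSucc_iff]
      exact h hxy

end ExtendLast

section Branching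

variable {α : Type*} [PartialOrder α]

theorem isMax_of_eq_last {n : ℕ} {T : α ≃ Fin (n + 1)} (hT : Monotone T) {c : α}
    (hc : T c = Fin.last n) : IsMax c := fun _ hx ↦
  (T.injective ((Fin.last_le_iff.1 (hc ▸ hT hx)).trans hc.symm)).le

theorem card_monotoneLabeling_succ [Finite α] [Fintype {c : α // IsMax c}] (n : ℕ) :
    Nat.card (MonotoneLabeling α (n + 1)) =
      ∑ c : {c : α // IsMax c}, Nat.card (MonotoneLabeling {x : α // x ≠ c} n) := by
  classical
  let maximum (T : MonotoneLabeling α (n + 1)) : {c : α // IsMax c} :=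
    ⟨T.1.symm (Fin.last n), isMax_of_eq_last T.2 (T.1.apply_symm_apply _)⟩
  have hmax {T : MonotoneLabeling α (n + 1)} {c : {c : α // IsMax c}} :
      maximum T = c ↔ T.1 c = Fin.last n := by
    rw [Subtype.ext_iff, Equiv.symm_apply_eq, eq_comm]
  rw [Nat.card_congr (Equiv.sigmaFiberEquiv maximum).symm, Nat.card_sigma]
  refine Finset.sum_congr rfl fun c _ ↦ (Nat.card_congr (.ofBijective (fun S ↦
    ⟨⟨extendLast c.1 S.1, (monotone_extendLast_iff c.2).2 S.2⟩,
      hmax.2 (extendLast_self c.1 S.1)⟩) ⟨fun S S' h ↦ ?_, fun ⟨⟨T, hT⟩, hTc⟩ ↦ ?_⟩)).symm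
  · exact Subtype.ext (extendLast_injective c.1 (congrArg (fun T ↦ T.1.1) h))
  · obtain ⟨S, rfl⟩ := exists_extendLast_eq c.1 (hmax.1 hTc)
    exact ⟨⟨S, (monotone_extendLast_iff c.2).1 hT⟩, rfl⟩

end Branching

theorem addBox_iff_exists_erase {μ lam : YoungDiagram} :
    AddBox μ lam ↔ ∃ c : lam.cells, μ.cells = lam.cells.erase c := by
  rw [addBox_iff_exists_insert]
  constructor
  · rintro ⟨c, hc, h⟩
    exact ⟨⟨c, h ▸ Finset.mem_insert_self c _⟩, by simp only [← h, Finset.erase_insert hc]⟩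
  · rintro ⟨c, h⟩
    rw [h]
    exact ⟨c, Finset.notMem_erase _ _, Finset.insert_erase c.2⟩

theorem isMax_iff_exists_erase {lam : YoungDiagram} {c : lam.cells} :
    IsMax c ↔ ∃ μ : YoungDiagram, μ.cells = lam.cells.erase c := by
  constructor
  · refine fun hc ↦ ⟨⟨lam.cells.erase c, fun a b hba ha ↦ ?_⟩, rfl⟩
    obtain ⟨hac, ha⟩ := Finset.mem_erase.1 (Finset.mem_coe.1 ha)
    refine Finset.mem_coe.2 (Finset.mem_erase.2 ⟨?_, lam.isLowerSet hba ha⟩)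
    rintro rfl
    exact hac (congrArg Subtype.val (hc.eq_of_le (b := ⟨a, ha⟩) hba)).symm
  · rintro ⟨μ, hμ⟩ x hcx
    by_contra hxc
    have hx : (x : ℕ × ℕ) ∈ μ.cells := by
      rw [hμ]
      exact Finset.mem_erase.2 ⟨fun h ↦ hxc (Subtype.ext h).le, x.2⟩
    have hc : (c : ℕ × ℕ) ∈ μ.cells := μ.isLowerSet hcx hx
    simp [hμ] at hc

theorem SYTCount_eq_card_of_erase {μ lam : YoungDiagram} {n : ℕ} (hlam : lam.card = n + 1)
    {c : lam.cells} (hc : μ.cells = lam.cells.erase c) :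
    SYTCount μ = Nat.card (MonotoneLabeling {x // x ≠ c} n) := by
  have hcard : μ.card = n := by
    rw [YoungDiagram.card, hc, Finset.card_erase_of_mem c.2, ← YoungDiagram.card, hlam,
      Nat.add_sub_cancel]
  rw [SYTCount_eq_card_monotoneLabeling hcard]
  have hmem {x : ℕ × ℕ} : x ∈ μ.cells ↔ ∃ hx : x ∈ lam.cells, (⟨x, hx⟩ : lam.cells) ≠ c := by
    simp [hc, Subtype.ext_iff, and_comm]
  refine card_monotoneLabeling_congr ⟨⟨fun x ↦ ⟨⟨x, (hmem.1 x.2).1⟩, (hmem.1 x.2).2⟩,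
    fun x ↦ ⟨x.1, hmem.2 ⟨x.1.2, x.2⟩⟩, fun _ ↦ rfl, fun _ ↦ rfl⟩, Iff.rfl⟩ n

theorem SYTCount_bot : SYTCount ⊥ = 1 := by
  rw [SYTCount_eq_card_monotoneLabeling (n := 0) rfl]
  have : IsEmpty (⊥ : YoungDiagram).cells := by
    rw [YoungDiagram.cells_bot]
    infer_instance
  exact Nat.card_eq_one_iff_unique.2 ⟨inferInstance, ⟨⟨Equiv.equivOfIsEmpty _ _, isEmptyElim⟩⟩⟩

theorem SYTCount_eq_sum_lowerCovers {lam : YoungDiagram} {n : ℕ} (hlam : lam.card = n + 1) :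
    SYTCount lam = ∑ μ ∈ lowerCovers lam, SYTCount μ := by
  classical
  rw [SYTCount_eq_card_monotoneLabeling hlam, card_monotoneLabeling_succ]
  choose μ hμ using fun c : {c : lam.cells // IsMax c} ↦ isMax_iff_exists_erase.1 c.2
  refine Finset.sum_bij (fun c _ ↦ μ c) (fun c _ ↦ ?_) (fun c _ c' _ h ↦ ?_) (fun ν hν ↦ ?_)
    fun c _ ↦ (SYTCount_eq_card_of_erase hlam (hμ c)).symm
  · exact mem_lowerCovers.2 (addBox_iff_exists_erase.2 ⟨c.1, hμ c⟩)
  · have herase : lam.cells.erase (c : lam.cells) = lam.cells.erase (c' : lam.cells) := by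
      rw [← hμ, ← hμ, h]
    exact Subtype.ext (Subtype.ext ((Finset.erase_inj _ c.1.2).1 herase))
  · obtain ⟨c, hc⟩ := addBox_iff_exists_erase.1 (mem_lowerCovers.1 hν)
    let c' : {c : lam.cells // IsMax c} := ⟨c, isMax_iff_exists_erase.2 ⟨ν, hc⟩⟩
    exact ⟨c', Finset.mem_univ _, YoungDiagram.ext ((hμ c').trans hc.symm)⟩

end StandardTableaux

section Frobenius

theorem sum_SYTCount_mul_schur {R : Type*} [CommRing R] {h : ℤ → R} (hzero : h 0 = 1)
    (hneg : ∀ k < 0, h k = 0) (n : ℕ) :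
    ∑ μ ∈ diagrams n, (SYTCount μ : R) * schur h μ = h 1 ^ n := by
  induction n with
  | zero => simp [SYTCount_bot, schur_bot]
  | succ n ih =>
    calc ∑ lam ∈ diagrams (n + 1), (SYTCount lam : R) * schur h lam
        = ∑ lam ∈ diagrams (n + 1), ∑ μ ∈ lowerCovers lam, (SYTCount μ : R) * schur h lam := by
          refine Finset.sum_congr rfl fun lam hlam ↦ ?_
          rw [SYTCount_eq_sum_lowerCovers (mem_diagrams.1 hlam), Nat.cast_sum, Finset.sum_mul]
      _ = ∑ μ ∈ diagrams n, (SYTCount μ : R) * ∑ lam ∈ upperCovers μ, schur h lam := by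
          simp only [sum_diagrams_succ_sum_lowerCovers, Finset.mul_sum]
      _ = h 1 * ∑ μ ∈ diagrams n, (SYTCount μ : R) * schur h μ := by
          simp only [sum_schur_upperCovers hzero hneg, Finset.mul_sum, mul_left_comm]
      _ = h 1 ^ (n + 1) := by rw [ih, pow_succ']

variable (K : Type*) [Field K]

/-- The sequence `1 / k!`, extended by `0` to negative `k`: the values of the complete
homogeneous functions under the exponential specialisation. -/
def invFactorial : ℤ → K
  | .ofNat n => (n.factorial : K)⁻¹
  | .negSucc _ => 0

@[simp]
theorem invFactorial_natCast (n : ℕ) : invFactorial K n = (n.factorial : K)⁻¹ := rfl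

theorem invFactorial_zero : invFactorial K 0 = 1 := by
  rw [← Nat.cast_zero, invFactorial_natCast, Nat.factorial_zero, Nat.cast_one, inv_one]

theorem invFactorial_of_neg {k : ℤ} (hk : k < 0) : invFactorial K k = 0 := by
  obtain ⟨n, rfl⟩ := Int.eq_negSucc_of_lt_zero hk
  rfl

variable [CharZero K]

theorem invFactorial_sub_one (k : ℤ) : invFactorial K (k - 1) = k * invFactorial K k := by
  rcases lt_or_ge k 0 with hk | hk
  · rw [invFactorial_of_neg K hk, invFactorial_of_neg K (by omega), mul_zero]
  · lift k to ℕ using hk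
    rcases k with _ | n
    · simp [invFactorial_of_neg K neg_one_lt_zero]
    · rw [Nat.cast_succ, add_sub_cancel_right, ← Nat.cast_succ, invFactorial_natCast,
        invFactorial_natCast, Nat.factorial_succ]
      push_cast
      field_simp

theorem SYTCount_eq_factorial_mul_schur (μ : YoungDiagram) :
    (SYTCount μ : K) = μ.card.factorial * schur (invFactorial K) μ := by
  induction hn : μ.card generalizing μ with
  | zero =>
    obtain rfl : μ = ⊥ := by simpa using mem_diagrams.2 hn
    simp [SYTCount_bot, schur_bot]
  | succ n ih =>
    have hih : ∀ ν ∈ lowerCovers μ,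
        (SYTCount ν : K) = n.factorial * schur (invFactorial K) ν := fun ν hν ↦
      ih ν (Nat.succ_injective ((mem_lowerCovers.1 hν).2.symm.trans hn))
    rw [SYTCount_eq_sum_lowerCovers hn, Nat.cast_sum, Finset.sum_congr rfl hih, ← Finset.mul_sum,
      sum_schur_lowerCovers (invFactorial_zero K) (fun _ ↦ invFactorial_of_neg K)
        (invFactorial_sub_one K), hn, Nat.factorial_succ]
    push_cast
    ring

end Frobenius

section Appell

theorem degVec_injective (μ : YoungDiagram) : Function.Injective (degVec μ) := by
  have hanti : StrictAnti (degVec μ) := fun i j hij ↦ by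
    have hrow : μ.rowLen j ≤ μ.rowLen i := μ.rowLen_anti i j hij.le
    have := j.2
    have : (i : ℕ) < j := hij
    unfold degVec
    omega
  exact hanti.injective

theorem det_factorial_mul_degVec_sub {R : Type*} [CommRing R] (h : ℤ → R) (μ : YoungDiagram) :
    (Matrix.of fun i j : Fin (nrows μ) ↦ ((degVec μ j).factorial : R) *
      h (degVec μ j - (i : ℕ))).det = (∏ j, ((degVec μ j).factorial : R)) *
        ((Equiv.Perm.sign (Fin.revPerm (n := nrows μ)) : ℤ) * schur h μ) := by
  rw [schur, ← Matrix.det_permute, ← Matrix.det_mul_row]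
  congr 1
  ext i j
  simp only [jacobiTrudi, parts, degVec, Matrix.of_apply, Matrix.submatrix_apply, id,
    Fin.revPerm_apply, Fin.val_rev]
  congr 2
  omega

variable {K : Type*} [Field K]

/-- Normalised Appell sequences `p`: each `p n` has derivative `n * p (n - 1)`, and `p 0 = 1`. -/
structure IsAppell (p : ℕ → K[X]) : Prop where
  zero : p 0 = 1
  derivative_succ (n : ℕ) : derivative (p (n + 1)) = (n + 1) * p n

/-- The sequence `p k / k!`, extended by `0` to negative `k`, so that differentiation
becomes an index shift. -/
noncomputable def dividedAppell (p : ℕ → K[X]) (k : ℤ) : K[X] := C (invFactorial K k) * p k.toNat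

/-- The Wronskian of the members of `p` whose degrees are given by the degree vector of `μ`,
divided by the Vandermonde product of these degrees. -/
noncomputable def wronskianPolynomial (p : ℕ → K[X]) (μ : YoungDiagram) : K[X] :=
  C (∏ q : Fin (nrows μ) × Fin (nrows μ) with q.1 < q.2,
      ((degVec μ q.2 : K) - (degVec μ q.1 : K)))⁻¹ *
    (Matrix.of fun i j : Fin (nrows μ) ↦ derivative^[(i : ℕ)] (p (degVec μ j))).det

theorem dividedAppell_of_neg (p : ℕ → K[X]) {k : ℤ} (hk : k < 0) : dividedAppell p k = 0 := by
  rw [dividedAppell, invFactorial_of_neg K hk, C_0, zero_mul]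

theorem dividedAppell_one (p : ℕ → K[X]) : dividedAppell p 1 = p 1 := by
  rw [dividedAppell, ← Nat.cast_one, invFactorial_natCast]
  simp

theorem dividedAppell_zero {p : ℕ → K[X]} (hp : IsAppell p) : dividedAppell p 0 = 1 := by
  rw [dividedAppell, invFactorial_zero, C_1, one_mul, Int.toNat_zero, hp.zero]

variable [CharZero K]

theorem descFactorial_eq_factorial_mul_invFactorial (n i : ℕ) :
    (n.descFactorial i : K) = n.factorial * invFactorial K (n - i) := by
  rcases le_or_gt i n with hi | hi
  · rw [← Nat.cast_sub hi, invFactorial_natCast, ← Nat.factorial_mul_descFactorial hi,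
      Nat.cast_mul, mul_comm, inv_mul_cancel_left₀ (Nat.cast_ne_zero.2 (Nat.factorial_ne_zero _))]
  · rw [Nat.descFactorial_of_lt hi, invFactorial_of_neg K (by omega), Nat.cast_zero, mul_zero]

theorem det_vandermonde_degVec (μ : YoungDiagram) :
    (Matrix.vandermonde fun j ↦ (degVec μ j : K)).det =
      (∏ j, ((degVec μ j).factorial : K)) *
        ((Equiv.Perm.sign (Fin.revPerm (n := nrows μ)) : ℤ) * schur (invFactorial K) μ) := by
  rw [Matrix.det_eval_matrixOfPolynomials_eq_det_vandermonde _ (fun i ↦ descPochhammer K i)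
    (fun i ↦ descPochhammer_natDegree K i) (fun i ↦ monic_descPochhammer K i),
    ← det_factorial_mul_degVec_sub, ← Matrix.det_transpose]
  congr 1
  ext i j
  simp only [Matrix.transpose_apply, Matrix.of_apply, descPochhammer_eval_eq_descFactorial,
    descFactorial_eq_factorial_mul_invFactorial]

namespace IsAppell

variable {p : ℕ → K[X]} (hp : IsAppell p)
include hp

theorem derivative_dividedAppell (k : ℤ) :
    derivative (dividedAppell p k) = dividedAppell p (k - 1) := by
  rcases lt_or_ge k 0 with hk | hk
  · rw [dividedAppell_of_neg p hk, dividedAppell_of_neg p (by omega), derivative_zero]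
  · lift k to ℕ using hk
    rcases k with _ | n
    · rw [Nat.cast_zero, dividedAppell_zero hp, dividedAppell_of_neg p (by omega), derivative_one]
    · rw [dividedAppell, dividedAppell, invFactorial_sub_one, Nat.cast_succ,
        add_sub_cancel_right, ← Nat.cast_succ, Int.toNat_natCast, Int.toNat_natCast,
        derivative_C_mul, hp.derivative_succ]
      push_cast
      simp only [C_mul, C_add, C_1, map_natCast]
      ring

theorem iterate_derivative (n i : ℕ) :
    derivative^[i] (p n) = n.factorial * dividedAppell p (n - i) := by
  induction i with
  | zero =>
    have hn : (n.factorial : K) ≠ 0 := Nat.cast_ne_zero.2 n.factorial_ne_zero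
    rw [Function.iterate_zero_apply, Nat.cast_zero, sub_zero, dividedAppell, invFactorial_natCast,
      Int.toNat_natCast, ← mul_assoc, ← map_natCast C, ← C_mul, mul_inv_cancel₀ hn, C_1, one_mul]
  | succ i ih =>
    rw [Function.iterate_succ_apply', ih, derivative_natCast_mul, hp.derivative_dividedAppell,
      sub_sub, Nat.cast_succ]

theorem schur_mul_wronskianPolynomial (μ : YoungDiagram) :
    C (schur (invFactorial K) μ) * wronskianPolynomial p μ = schur (dividedAppell p) μ := by
  have hvand : (∏ q : Fin (nrows μ) × Fin (nrows μ) with q.1 < q.2,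
      ((degVec μ q.2 : K) - (degVec μ q.1 : K))) =
        (Matrix.vandermonde fun j ↦ (degVec μ j : K)).det := by
    rw [Matrix.det_vandermonde, Finset.prod_sigma']
    exact Finset.prod_bij' (fun q _ ↦ ⟨q.1, q.2⟩) (fun q _ ↦ (q.1, q.2)) (by simp) (by simp)
      (by simp) (by simp) (by simp)
  have hne : (Matrix.vandermonde fun j ↦ (degVec μ j : K)).det ≠ 0 :=
    Matrix.det_vandermonde_ne_zero_iff.2 (Nat.cast_injective.comp (degVec_injective μ))
  rw [det_vandermonde_degVec] at hvand hne
  simp only [wronskianPolynomial, hvand, hp.iterate_derivative, det_factorial_mul_degVec_sub]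
  set A := ∏ j, ((degVec μ j).factorial : K)
  set s : K := ((Equiv.Perm.sign (Fin.revPerm (n := nrows μ)) : ℤ) : K)
  obtain ⟨hA, hs, hschur⟩ : A ≠ 0 ∧ s ≠ 0 ∧ schur (invFactorial K) μ ≠ 0 := by
    simpa only [mul_ne_zero_iff] using hne
  have hinv : schur (invFactorial K) μ * (A * (s * schur (invFactorial K) μ))⁻¹ * (A * s) = 1 := by
    field_simp
  calc _ = C (schur (invFactorial K) μ * (A * (s * schur (invFactorial K) μ))⁻¹ * (A * s)) *
        schur (dividedAppell p) μ := by
        simp only [A, s, C_mul, map_prod, map_natCast, map_intCast, mul_assoc]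
    _ = schur (dividedAppell p) μ := by rw [hinv, C_1, one_mul]

end IsAppell

theorem stmt12_general {p : ℕ → K[X]} (hp : IsAppell p) (n : ℕ) :
    ∑ᶠ μ ∈ {μ : YoungDiagram | μ.card = n},
      C ((SYTCount μ : K) ^ 2 / (n.factorial : K)) * wronskianPolynomial p μ = p 1 ^ n := by
  have hterm : ∀ μ ∈ diagrams n,
      C ((SYTCount μ : K) ^ 2 / (n.factorial : K)) * wronskianPolynomial p μ =
        SYTCount μ * schur (dividedAppell p) μ := fun μ hμ ↦ by
    have hn : (n.factorial : K) ≠ 0 := Nat.cast_ne_zero.2 n.factorial_ne_zero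
    have hcoeff : (SYTCount μ : K) ^ 2 / (n.factorial : K) =
        SYTCount μ * schur (invFactorial K) μ := by
      rw [sq, mul_div_assoc, SYTCount_eq_factorial_mul_schur, mem_diagrams.1 hμ,
        mul_div_cancel_left₀ _ hn]
    rw [hcoeff, C_mul, mul_assoc, hp.schur_mul_wronskianPolynomial, map_natCast]
  rw [finsum_mem_eq_finite_toFinset_sum _ (finite_setOf_card_eq n), ← diagrams,
    Finset.sum_congr rfl hterm, sum_SYTCount_mul_schur (dividedAppell_zero hp)
      fun _ ↦ dividedAppell_of_neg p, dividedAppell_one]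

end Appell

section Laguerre

theorem lm_succ (α : ℝ) (n : ℕ) :
    lm α (n + 1) = (X + C α - (n : ℝ[X])) * lm α n + (n : ℝ[X]) * X * lm α (n - 1) := by
  rcases n with _ | n
  · simp [lm]
  · simp only [lm, Nat.add_sub_cancel, C_sub, C_add, map_natCast, map_ofNat, C_1]
    push_cast
    ring

theorem derivative_lm (α : ℝ) (n : ℕ) : derivative (lm α n) = (n : ℝ[X]) * lm α (n - 1) := by
  induction n using Nat.twoStepInduction with
  | zero => simp [lm]
  | one => simp [lm]
  | more n ih ih' =>
    rw [lm_succ, Nat.add_sub_cancel]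
    simp only [derivative_add, derivative_sub, derivative_mul, derivative_X, derivative_C,
      derivative_natCast, ih, ih', Nat.add_sub_cancel]
    rw [show n + 2 - 1 = n + 1 from rfl, lm_succ]
    push_cast
    ring

theorem isAppell_lm (α : ℝ) : IsAppell (lm α) where
  zero := rfl
  derivative_succ n := by rw [derivative_lm, Nat.cast_succ, Nat.add_sub_cancel]

end Laguerre

theorem stmt12 (α : ℝ) (n : ℕ) :
    ∑ᶠ μ ∈ {μ : YoungDiagram | μ.card = n},
        C ((SYTCount μ : ℝ) ^ 2 / (Nat.factorial n : ℝ)) * lW α μ = (X + C α) ^ n :=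
  stmt12_general (isAppell_lm α) n
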